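/- Let m ≥ 1 and let d₁, …, d_m be natural numbers. Then in the field ℚ(q,x) of rational functions in two indeterminates the following identity holds: (x²;q²)_{d₁+⋯+d_m} / ((q²;q²)_{d₁}⋯(q²;q²)_{d_m}) = Σ over all decompositions α₁+β₁=d₁, …, α_m+β_m=d_m (with α_i, β_i ∈ ℕ) of (−x²q^{−1})^{α₁+⋯+α_m} · q^{α₁²+⋯+α_m² + 2·Σ_{i=1}^{m−1} α_{i+1}(d₁+⋯+d_i)} / ((q²;q²)_{α₁}⋯(q²;q²)_{α_m}·(q²;q²)_{β₁}⋯(q²;q²)_{β_m}). -/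

import Mathlib

/-!
The sum over `α` factorizes as a product over `i`, because the exponent of `q` couples
each `α i` only to the constants `d l`. The factor at `i` is the finite `q`-binomial theorem (`qbinomial`) for
`(c;q²)_{d i}` with `c = x² q^{2(d_1+⋯+d_{i-1})}`, and these shifted Pochhammer symbols multiply to
`(x²;q²)_{d_1+⋯+d_m}` (`poch_sum`).
-/

/-!
STATEMENT 0: Lemma of Kucharski (algebraic identity in ℚ(q,x)).

Setup: `F = ℚ(q,x)` is realized as the fraction field of the polynomial ring in two
indeterminates over ℚ, with `qv` playing the role of `q` and `xv` of `x`.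
`poch c N = (c;q²)_N = ∏_{i=0}^{N-1} (1 - c q^{2i})`, so `qq2 N = (q²;q²)_N`.

The sum on the right ranges over all decompositions `α_i + β_i = d_i` with
`α_i, β_i ∈ ℕ`; equivalently over all `α` with `α_i ≤ d_i`, setting `β_i = d_i - α_i`.
The cross term `Σ_{i=1}^{m-1} α_{i+1}(d_1+⋯+d_i)` is written as
`Σ_j α_j · (Σ_{l<j} d_l)` (the `j = 0` summand vanishes).
-/

open Finset

noncomputable section

/-- The field `ℚ(q,x)` of rational functions in two indeterminates over `ℚ`. -/
abbrev F : Type := FractionRing (MvPolynomial (Fin 2) ℚ)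

/-- The indeterminate `q`. -/
def qv : F := algebraMap (MvPolynomial (Fin 2) ℚ) F (MvPolynomial.X 0)

/-- The indeterminate `x`. -/
def xv : F := algebraMap (MvPolynomial (Fin 2) ℚ) F (MvPolynomial.X 1)

/-- The Pochhammer symbol `(c;q²)_N = ∏_{i=0}^{N-1} (1 - c q^{2i})`. -/
def poch (c : F) (N : ℕ) : F := ∏ i ∈ Finset.range N, (1 - c * qv ^ (2 * i))

/-- `(q²;q²)_N = ∏_{i=1}^{N} (1 - q^{2i})`. -/
def qq2 (N : ℕ) : F := poch (qv ^ 2) N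

lemma qv_ne_zero : qv ≠ 0 := by
  unfold qv
  simp

lemma one_sub_qv_pow_ne_zero (n : ℕ) : 1 - qv ^ (n + 1) ≠ 0 := by
  intro h
  have h1 : (MvPolynomial.X 0 : MvPolynomial (Fin 2) ℚ) ^ (n + 1) = 1 := by
    apply IsFractionRing.injective (MvPolynomial (Fin 2) ℚ) F
    rw [map_pow, map_one]
    exact (sub_eq_zero.mp h).symm
  -- Specializing all variables to `0` turns the relation into `0 = 1`.
  have h2 := congrArg (MvPolynomial.eval (fun _ => (0 : ℚ))) h1
  simp at h2

lemma qq2_succ (n : ℕ) : qq2 (n + 1) = qq2 n * (1 - qv ^ (2 * n + 2)) := by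
  unfold qq2 poch
  rw [prod_range_succ]
  ring

lemma qq2_zero : qq2 0 = 1 := by simp [qq2, poch]

lemma qq2_ne_zero (n : ℕ) : qq2 n ≠ 0 := by
  induction n with
  | zero => simp [qq2_zero]
  | succ n ih =>
    rw [qq2_succ]
    exact mul_ne_zero ih (one_sub_qv_pow_ne_zero (2 * n + 1))

/-- The finite `q`-binomial theorem in base `q²`, with `c = -u q`. The inductive step is the
`q`-Pascal rule, coming from
`1 - q^{2(n+1)} = (1 - q^{2(n+1-a)}) + q^{2(n+1-a)} (1 - q^{2a})`. -/
lemma qbinomial (u : F) (n : ℕ) :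
    poch (-u * qv) n / qq2 n =
      ∑ a ∈ range (n + 1), u ^ a * qv ^ (a ^ 2) / (qq2 a * qq2 (n - a)) := by
  induction n with
  | zero => simp [poch, qq2_zero]
  | succ n ih =>
    have hq : 1 - qv ^ (2 * n + 2) ≠ 0 := one_sub_qv_pow_ne_zero (2 * n + 1)
    have hP : poch (-u * qv) (n + 1) = poch (-u * qv) n * (1 + u * qv ^ (2 * n + 1)) := by
      unfold poch
      rw [prod_range_succ]
      ring
    have hL : poch (-u * qv) (n + 1) / qq2 (n + 1) * (1 - qv ^ (2 * n + 2)) =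
        poch (-u * qv) n / qq2 n * (1 + u * qv ^ (2 * n + 1)) := by
      rw [hP, qq2_succ]
      have := qq2_ne_zero n
      field_simp
    apply mul_right_cancel₀ hq
    rw [hL, ih, sum_mul]
    set t : ℕ → F := fun a => u ^ a * qv ^ (a ^ 2) / (qq2 a * qq2 (n + 1 - a)) with ht
    have hsplit : ∀ a ∈ range (n + 1 + 1), t a * (1 - qv ^ (2 * n + 2)) =
        t a * (1 - qv ^ (2 * (n + 1 - a))) +
          t a * (qv ^ (2 * (n + 1 - a)) * (1 - qv ^ (2 * a))) := by
      intro a ha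
      obtain ⟨b, hb⟩ := Nat.exists_eq_add_of_le (Nat.lt_succ_iff.mp (mem_range.mp ha))
      have e1 : n + 1 - a = b := by omega
      have e2 : 2 * n + 2 = 2 * a + 2 * b := by omega
      rw [e1, e2]
      ring
    rw [sum_mul, sum_congr rfl hsplit, sum_add_distrib, sum_range_succ (n := n + 1),
      sum_range_succ' (fun a => t a * (qv ^ (2 * (n + 1 - a)) * (1 - qv ^ (2 * a)))) (n + 1)]
    simp only [Nat.sub_self, mul_zero, pow_zero, sub_self, add_zero]
    rw [← sum_add_distrib]
    refine sum_congr rfl fun a ha => ?_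
    obtain ⟨b, hb⟩ := Nat.exists_eq_add_of_le (Nat.lt_succ_iff.mp (mem_range.mp ha))
    subst hb
    have e1 : a + b - a = b := by omega
    have e2 : a + b + 1 - a = b + 1 := by omega
    have e3 : a + b + 1 - (a + 1) = b := by omega
    simp only [ht, e1, e2, e3, qq2_succ]
    have h1 := qq2_ne_zero a
    have h2 := qq2_ne_zero b
    have h3 : 1 - qv ^ (2 * a + 2) ≠ 0 := one_sub_qv_pow_ne_zero (2 * a + 1)
    have h4 : 1 - qv ^ (2 * b + 2) ≠ 0 := one_sub_qv_pow_ne_zero (2 * b + 1)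
    rw [show 2 * (b + 1) = 2 * b + 2 by ring, show 2 * (a + 1) = 2 * a + 2 by ring]
    have g1 : u ^ a * qv ^ a ^ 2 / (qq2 a * (qq2 b * (1 - qv ^ (2 * b + 2)))) *
        (1 - qv ^ (2 * b + 2)) = u ^ a * qv ^ a ^ 2 / (qq2 a * qq2 b) := by
      field_simp
    have g2 : u ^ (a + 1) * qv ^ (a + 1) ^ 2 / (qq2 a * (1 - qv ^ (2 * a + 2)) * qq2 b) *
        (qv ^ (2 * b) * (1 - qv ^ (2 * a + 2))) =
        u ^ (a + 1) * qv ^ (a + 1) ^ 2 * qv ^ (2 * b) / (qq2 a * qq2 b) := by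
      field_simp
    rw [g1, g2]
    ring

lemma poch_add (c : F) (M N : ℕ) :
    poch c (M + N) = poch c M * poch (c * qv ^ (2 * M)) N := by
  unfold poch
  rw [prod_range_add]
  congr 1
  refine prod_congr rfl fun i _ => ?_
  ring

lemma poch_sum (c : F) (m : ℕ) (d : Fin m → ℕ) :
    poch c (∑ i, d i) = ∏ i, poch (c * qv ^ (2 * ∑ l ∈ Iio i, d l)) (d i) := by
  induction m with
  | zero => simp [poch]
  | succ m ih =>
    rw [Fin.sum_univ_castSucc, poch_add, ih, Fin.prod_univ_castSucc]
    have h1 : ∀ i : Fin m, ∑ l ∈ Iio i.castSucc, d l = ∑ l ∈ Iio i, d l.castSucc := by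
      intro i
      rw [Fin.Iio_castSucc, sum_map]
      rfl
    have h2 : ∑ l ∈ Iio (Fin.last m), d l = ∑ l : Fin m, d l.castSucc := by
      rw [Fin.Iio_last_eq_map, sum_map]
      rfl
    simp only [h1, h2]

theorem statement0 (m : ℕ) (hm : 1 ≤ m) (d : Fin m → ℕ) :
    poch (xv ^ 2) (∑ i, d i) / ∏ i, qq2 (d i) =
      ∑ α ∈ Fintype.piFinset (fun i => Finset.range (d i + 1)),
        (-(xv ^ 2) * qv⁻¹) ^ (∑ i, α i) *
            qv ^ ((∑ i, (α i) ^ 2) + 2 * ∑ i, α i * (∑ l ∈ Finset.Iio i, d l)) /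
          ((∏ i, qq2 (α i)) * ∏ i, qq2 (d i - α i)) := by
  rw [poch_sum, ← prod_div_distrib]
  have key : ∀ i, poch (xv ^ 2 * qv ^ (2 * ∑ l ∈ Iio i, d l)) (d i) / qq2 (d i) =
      ∑ a ∈ range (d i + 1), (-(xv ^ 2) * qv⁻¹ * qv ^ (2 * ∑ l ∈ Iio i, d l)) ^ a *
        qv ^ (a ^ 2) / (qq2 a * qq2 (d i - a)) := by
    intro i
    rw [← qbinomial]
    congr 2
    have := qv_ne_zero
    field_simp
  rw [prod_congr rfl fun i _ => key i, prod_univ_sum]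
  refine sum_congr rfl fun α _ => ?_
  rw [prod_div_distrib, prod_mul_distrib, prod_mul_distrib]
  congr 1
  simp only [mul_pow _ (qv ^ _), prod_mul_distrib, ← pow_mul, prod_pow_eq_pow_sum]
  rw [pow_add, mul_sum, mul_assoc, mul_comm (qv ^ _) (qv ^ _)]
  congr 4
  funext i
  ring

end
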